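/- (Dudley entropy integral bound) For a function class G of functions Z → ℝ and fixed data points z₁,…,z_n, the empirical Rademacher complexity satisfies R̂_n(G) ≤ inf_{ε ≥ 0} { 4ε + 12 ∫_ε^{sup_{G∈G} √(Ê[G²])} √(log N(G, τ, d_n)/n) dτ }, where d_n(g,h) = √((1/n)Σᵢ(g(zᵢ)−h(zᵢ))²) and N(G, τ, d_n) is the τ-covering number of G under d_n. -/

import Mathlib

open MeasureTheory

/-- The value `±1` of a Rademacher sign encoded as a boolean. -/
def signVal (b : Bool) : ℝ := if b then 1 else -1

/-- Empirical Rademacher complexity of a class `G` of functions on the sample `z`. -/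
noncomputable def empRad {Z : Type*} (G : Set (Z → ℝ)) {n : ℕ} (z : Fin n → Z) : ℝ :=
  (∑ σ : Fin n → Bool, ⨆ g : G, (n : ℝ)⁻¹ * ∑ i, signVal (σ i) * (g : Z → ℝ) (z i)) / 2 ^ n

/-- The empirical `L²` pseudometric on functions determined by the sample `z`:
`d_n(g,h) = √((1/n) ∑ᵢ (g(zᵢ) − h(zᵢ))²)`. -/
noncomputable def dnMetric {Z : Type*} {n : ℕ} (z : Fin n → Z) (g h : Z → ℝ) : ℝ :=
  Real.sqrt ((n : ℝ)⁻¹ * ∑ i, (g (z i) - h (z i)) ^ 2)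

/-- The `τ`-covering number of `G` under `d_n`: the minimal cardinality of a finite set of
functions `C` such that every `g ∈ G` is within distance `τ` of some member of `C`. -/
noncomputable def covNum {Z : Type*} {n : ℕ} (z : Fin n → Z) (G : Set (Z → ℝ)) (τ : ℝ) : ℕ :=
  sInf {k | ∃ C : Finset (Z → ℝ), C.card = k ∧ ∀ g ∈ G, ∃ h ∈ C, dnMetric z g h ≤ τ}

/-- The moment generating function of a Rademacher sum is sub-Gaussian. -/
theorem sum_exp_rademacher_le {n : ℕ} (a : Fin n → ℝ) (t : ℝ) :
    ∑ σ : Fin n → Bool, Real.exp (t * ∑ i, signVal (σ i) * a i) ≤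
      2 ^ n * Real.exp (t ^ 2 / 2 * ∑ i, a i ^ 2) := by
  have key : ∑ σ : Fin n → Bool, Real.exp (t * ∑ i, signVal (σ i) * a i) =
      ∏ i, ∑ b : Bool, Real.exp (t * (signVal b * a i)) := by
    simp only [Finset.mul_sum, Real.exp_sum]
    rw [Finset.prod_univ_sum, Fintype.piFinset_univ]
  rw [key, Finset.mul_sum, Real.exp_sum]
  calc ∏ i, ∑ b : Bool, Real.exp (t * (signVal b * a i))
      ≤ ∏ i, 2 * Real.exp (t ^ 2 / 2 * a i ^ 2) := by
        refine Finset.prod_le_prod (fun i _ => by positivity) fun i _ => ?_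
        have h := Real.cosh_le_exp_half_sq (t * a i)
        rw [Real.cosh_eq] at h
        have e : (t * a i) ^ 2 / 2 = t ^ 2 / 2 * a i ^ 2 := by ring
        rw [e] at h
        simp only [Fintype.sum_bool, signVal, if_true, Bool.false_eq_true, if_false, one_mul,
          neg_one_mul, mul_neg]
        linarith
    _ = 2 ^ n * ∏ i, Real.exp (t ^ 2 / 2 * a i ^ 2) := by
        simp [Finset.prod_mul_distrib]

/-- Massart's finite class lemma. -/
theorem massart_finite_class {n : ℕ} (A : Finset (Fin n → ℝ)) (hA : A.Nonempty) {r : ℝ}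
    (hr : 0 ≤ r) (hAr : ∀ a ∈ A, ∑ i, a i ^ 2 ≤ r ^ 2) :
    (∑ σ : Fin n → Bool, A.sup' hA fun a => ∑ i, signVal (σ i) * a i) / 2 ^ n ≤
      r * √(2 * Real.log A.card) := by
  set M : (Fin n → Bool) → ℝ := fun σ => A.sup' hA fun a => ∑ i, signVal (σ i) * a i with hM
  set x := (∑ σ, M σ) / 2 ^ n with hx
  have hcard : (1 : ℝ) ≤ A.card := by exact_mod_cast hA.card_pos
  have hlog : 0 ≤ Real.log A.card := Real.log_nonneg hcard
  rcases lt_or_ge x 0 with hx0 | hx0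
  · exact hx0.le.trans (by positivity)
  have hpos : ∀ t : ℝ, 0 ≤ t → t * x ≤ Real.log A.card + t ^ 2 / 2 * r ^ 2 := by
    intro t ht
    have hw : ∑ _σ : Fin n → Bool, ((2 : ℝ) ^ n)⁻¹ = 1 := by simp
    have jensen := convexOn_exp.map_sum_le (t := Finset.univ)
      (w := fun _ : Fin n → Bool => ((2 : ℝ) ^ n)⁻¹) (p := fun σ => t * M σ)
      (fun _ _ => by positivity) hw (fun _ _ => Set.mem_univ _)
    simp only [smul_eq_mul, ← Finset.mul_sum] at jensen
    have hsum : ∑ σ, Real.exp (t * M σ) ≤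
        A.card * (2 ^ n * Real.exp (t ^ 2 / 2 * r ^ 2)) := by
      calc ∑ σ, Real.exp (t * M σ)
          ≤ ∑ σ : Fin n → Bool, ∑ a ∈ A, Real.exp (t * ∑ i, signVal (σ i) * a i) := by
            refine Finset.sum_le_sum fun σ _ => ?_
            obtain ⟨a, ha, hae⟩ := A.exists_mem_eq_sup' hA fun a => ∑ i, signVal (σ i) * a i
            simp only [hM, hae]
            exact Finset.single_le_sum
              (f := fun a : Fin n → ℝ => Real.exp (t * ∑ i, signVal (σ i) * a i))
              (fun _ _ => (Real.exp_pos _).le) ha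
        _ = ∑ a ∈ A, ∑ σ : Fin n → Bool, Real.exp (t * ∑ i, signVal (σ i) * a i) :=
            Finset.sum_comm
        _ ≤ ∑ a ∈ A, 2 ^ n * Real.exp (t ^ 2 / 2 * r ^ 2) := by
            refine Finset.sum_le_sum fun a ha => (sum_exp_rademacher_le a t).trans ?_
            gcongr
            exact hAr a ha
        _ = _ := by rw [Finset.sum_const, nsmul_eq_mul]
    have hexp : Real.exp (t * x) ≤ Real.exp (Real.log A.card + t ^ 2 / 2 * r ^ 2) := by
      rw [Real.exp_add, Real.exp_log (by linarith)]
      calc Real.exp (t * x) = Real.exp ((2 ^ n)⁻¹ * (t * ∑ σ, M σ)) := by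
            rw [hx]; ring_nf
        _ ≤ (2 ^ n)⁻¹ * ∑ σ, Real.exp (t * M σ) := jensen
        _ ≤ (2 ^ n)⁻¹ * (A.card * (2 ^ n * Real.exp (t ^ 2 / 2 * r ^ 2))) := by gcongr
        _ = _ := by field_simp
    exact Real.exp_le_exp.mp hexp
  have hd : discrim (r ^ 2 / 2) (-x) (Real.log A.card) ≤ 0 := by
    refine discrim_le_zero fun t => ?_
    rcases le_total 0 t with ht | ht
    · nlinarith [hpos t ht]
    · nlinarith [mul_nonneg hx0 (neg_nonneg.mpr ht), sq_nonneg (t * r)]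
  rw [discrim] at hd
  refine le_of_abs_le (abs_le_of_sq_le_sq ?_ (by positivity))
  rw [mul_pow, Real.sq_sqrt (by positivity)]
  nlinarith

section Pseudometric

variable {Z : Type*} {n : ℕ} (z : Fin n → Z)

theorem dnMetric_eq_dist (g h : Z → ℝ) :
    dnMetric z g h = √((n : ℝ)⁻¹) *
      dist (WithLp.toLp 2 fun i => g (z i) : EuclideanSpace ℝ (Fin n))
        (WithLp.toLp 2 fun i => h (z i)) := by
  rw [dnMetric, Real.sqrt_mul (by positivity), EuclideanSpace.dist_eq]
  simp [Real.dist_eq]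

theorem dnMetric_comm (g h : Z → ℝ) : dnMetric z g h = dnMetric z h g := by
  rw [dnMetric_eq_dist, dnMetric_eq_dist, dist_comm]

theorem dnMetric_triangle (f g h : Z → ℝ) :
    dnMetric z f h ≤ dnMetric z f g + dnMetric z g h := by
  simp only [dnMetric_eq_dist, ← mul_add]
  gcongr
  exact dist_triangle _ _ _

theorem sum_sq_le_of_dnMetric_le (hn : 0 < n) {g h : Z → ℝ} {r : ℝ}
    (hd : dnMetric z g h ≤ r) : ∑ i, (g (z i) - h (z i)) ^ 2 ≤ (√n * r) ^ 2 := by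
  have hr : 0 ≤ r := (Real.sqrt_nonneg _).trans hd
  have hn' : (0 : ℝ) < n := by exact_mod_cast hn
  rw [dnMetric, Real.sqrt_le_left hr, inv_mul_le_iff₀ hn'] at hd
  rwa [mul_pow, Real.sq_sqrt hn'.le]

/-- Cauchy–Schwarz: a normalized Rademacher sum is at most the empirical distance. -/
theorem rademacher_sum_le_of_dnMetric_le (hn : 0 < n) {g h : Z → ℝ} {r : ℝ}
    (hd : dnMetric z g h ≤ r) (σ : Fin n → Bool) :
    (n : ℝ)⁻¹ * ∑ i, signVal (σ i) * (g (z i) - h (z i)) ≤ r := by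
  have hr : 0 ≤ r := (Real.sqrt_nonneg _).trans hd
  have hn' : (0 : ℝ) < n := by exact_mod_cast hn
  have hs : ∑ i, signVal (σ i) ^ 2 = (n : ℝ) := by
    have : ∀ b, signVal b ^ 2 = 1 := by intro b; cases b <;> simp [signVal]
    simp [this]
  have hcs := Finset.sum_mul_sq_le_sq_mul_sq Finset.univ (fun i => signVal (σ i))
    (fun i => g (z i) - h (z i))
  rw [hs] at hcs
  have hsq := sum_sq_le_of_dnMetric_le z hn hd
  rw [mul_pow, Real.sq_sqrt hn'.le] at hsq
  rw [inv_mul_le_iff₀ hn']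
  refine le_of_abs_le (abs_le_of_sq_le_sq (hcs.trans ?_) (by positivity))
  calc (n : ℝ) * ∑ i, (g (z i) - h (z i)) ^ 2 ≤ n * (n * r ^ 2) := by gcongr
    _ = _ := by ring

end Pseudometric

section CoveringNumber

variable {Z : Type*} {n : ℕ} {z : Fin n → Z} {G : Set (Z → ℝ)} {D : ℝ}

theorem covNum_le_card {τ : ℝ} (C : Finset (Z → ℝ))
    (hC : ∀ g ∈ G, ∃ h ∈ C, dnMetric z g h ≤ τ) : covNum z G τ ≤ C.card :=
  Nat.sInf_le ⟨C, rfl, hC⟩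

/-- Grid covers: a bounded class has a cover of size polynomial in `1 / τ`. -/
theorem exists_grid_cover (hGne : G.Nonempty) (hn : 0 < n)
    (hD : ∀ g ∈ G, dnMetric z g 0 ≤ D) {τ : ℝ} (hτ : 0 < τ) :
    ∃ C : Finset (Z → ℝ), C.card ≤ (2 * ⌈√n * D / τ⌉₊ + 1) ^ n ∧
      ∀ g ∈ G, ∃ h ∈ C, dnMetric z g h ≤ τ := by
  classical
  obtain ⟨g₀, hg₀⟩ := hGne
  have hn' : (0 : ℝ) < n := by exact_mod_cast hn
  have hD0 : 0 ≤ D := (Real.sqrt_nonneg _).trans (hD g₀ hg₀)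
  set m := ⌈√n * D / τ⌉₊
  let cell : (Z → ℝ) → Fin n → ℤ := fun g i => ⌊g (z i) / τ⌋
  let P : Finset (Fin n → ℤ) := Fintype.piFinset fun _ => Finset.Icc (-(m : ℤ)) m
  let rep : (Fin n → ℤ) → Z → ℝ := fun p =>
    if hp : ∃ g ∈ G, cell g = p then hp.choose else g₀
  have hcell : ∀ g ∈ G, cell g ∈ P := by
    intro g hg
    refine Fintype.mem_piFinset.mpr fun i => ?_
    have h1 := sum_sq_le_of_dnMetric_le z hn (hD g hg)
    have h2 : g (z i) ^ 2 ≤ ∑ i, (g (z i) - (0 : Z → ℝ) (z i)) ^ 2 := by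
      simpa using Finset.single_le_sum (f := fun i => g (z i) ^ 2)
        (fun _ _ => sq_nonneg _) (Finset.mem_univ i)
    have h3 : |g (z i)| ≤ √n * D := abs_le_of_sq_le_sq (h2.trans h1) (by positivity)
    have h4 : |g (z i) / τ| ≤ m := by
      rw [abs_div, abs_of_pos hτ]
      exact (div_le_div_of_nonneg_right h3 hτ.le).trans (Nat.le_ceil _)
    obtain ⟨h5, h6⟩ := abs_le.mp h4
    refine Finset.mem_Icc.mpr ⟨Int.le_floor.mpr (by push_cast; exact h5), ?_⟩
    have : ((⌊g (z i) / τ⌋ : ℤ) : ℝ) ≤ ((m : ℤ) : ℝ) :=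
      (Int.floor_le _).trans (by push_cast; exact h6)
    exact_mod_cast this
  refine ⟨P.image rep, Finset.card_image_le.trans ?_, fun g hg => ?_⟩
  · have : (Finset.Icc (-(m : ℤ)) m).card = 2 * m + 1 := by rw [Int.card_Icc]; omega
    simp [P, Fintype.card_piFinset, this]
  · refine ⟨rep (cell g), Finset.mem_image_of_mem _ (hcell g hg), ?_⟩
    have hex : ∃ g' ∈ G, cell g' = cell g := ⟨g, hg, rfl⟩
    have hrep : cell (rep (cell g)) = cell g := by
      simp only [rep, dif_pos hex]
      exact hex.choose_spec.2
    rw [dnMetric, Real.sqrt_le_left hτ.le, inv_mul_le_iff₀ hn']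
    have hi : ∀ i, (g (z i) - rep (cell g) (z i)) ^ 2 ≤ τ ^ 2 := by
      intro i
      have h1 := Int.abs_sub_lt_one_of_floor_eq_floor (congrFun hrep i).symm
      rw [← sub_div, abs_div, abs_of_pos hτ, div_lt_one hτ] at h1
      rw [← sq_abs]
      gcongr
    simpa using Finset.sum_le_sum fun i (_ : i ∈ Finset.univ) => hi i

theorem exists_min_cover (hGne : G.Nonempty) (hn : 0 < n)
    (hD : ∀ g ∈ G, dnMetric z g 0 ≤ D) {τ : ℝ} (hτ : 0 < τ) :
    ∃ C : Finset (Z → ℝ), C.card = covNum z G τ ∧ ∀ g ∈ G, ∃ h ∈ C, dnMetric z g h ≤ τ := by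
  obtain ⟨C, -, hC⟩ := exists_grid_cover hGne hn hD hτ
  exact Nat.sInf_mem
    (s := {k | ∃ C : Finset (Z → ℝ), C.card = k ∧ ∀ g ∈ G, ∃ h ∈ C, dnMetric z g h ≤ τ})
    ⟨C.card, C, rfl, hC⟩

theorem one_le_covNum (hGne : G.Nonempty) (hn : 0 < n)
    (hD : ∀ g ∈ G, dnMetric z g 0 ≤ D) {τ : ℝ} (hτ : 0 < τ) : 1 ≤ covNum z G τ := by
  obtain ⟨C, hcard, hC⟩ := exists_min_cover hGne hn hD hτ
  obtain ⟨g, hg⟩ := hGne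
  obtain ⟨h, hh, -⟩ := hC g hg
  rw [← hcard]
  exact Finset.card_pos.mpr ⟨h, hh⟩

theorem covNum_antitoneOn (hGne : G.Nonempty) (hn : 0 < n)
    (hD : ∀ g ∈ G, dnMetric z g 0 ≤ D) : AntitoneOn (covNum z G) (Set.Ioi 0) := by
  intro s hs t _ hst
  obtain ⟨C, hcard, hC⟩ := exists_min_cover hGne hn hD hs
  rw [← hcard]
  refine covNum_le_card C fun g hg => ?_
  obtain ⟨h, hh, hd⟩ := hC g hg
  exact ⟨h, hh, hd.trans hst⟩

theorem covNum_le_one_of_le (hD : ∀ g ∈ G, dnMetric z g 0 ≤ D) {τ : ℝ} (hτ : D ≤ τ) :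
    covNum z G τ ≤ 1 :=
  covNum_le_card {0} fun g hg => ⟨0, by simp, (hD g hg).trans hτ⟩

theorem sqrt_entropy_antitoneOn (hGne : G.Nonempty) (hn : 0 < n)
    (hD : ∀ g ∈ G, dnMetric z g 0 ≤ D) :
    AntitoneOn (fun τ => √(Real.log (covNum z G τ) / n)) (Set.Ioi 0) := by
  intro s hs t ht hst
  have h1 : (1 : ℝ) ≤ covNum z G t := by exact_mod_cast one_le_covNum hGne hn hD ht
  have h2 : (covNum z G t : ℝ) ≤ covNum z G s := by
    exact_mod_cast covNum_antitoneOn hGne hn hD hs ht hst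
  dsimp only
  gcongr

theorem sqrt_entropy_le (hGne : G.Nonempty) (hn : 0 < n)
    (hD : ∀ g ∈ G, dnMetric z g 0 ≤ D) {τ : ℝ} (hτ : 0 < τ) (hτD : τ ≤ D) :
    √(Real.log (covNum z G τ) / n) ≤ √(2 * √n * D + 2 * D) * τ ^ (-(1 / 2) : ℝ) := by
  have hn' : (0 : ℝ) < n := by exact_mod_cast hn
  obtain ⟨C, hcard, hC⟩ := exists_grid_cover hGne hn hD hτ
  have hD0 : 0 ≤ D := hτ.le.trans hτD
  have h1 : (1 : ℝ) ≤ covNum z G τ := by exact_mod_cast one_le_covNum hGne hn hD hτ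
  have h2 : (covNum z G τ : ℝ) ≤ (2 * (⌈√n * D / τ⌉₊ : ℝ) + 1) ^ n := by
    exact_mod_cast (covNum_le_card C hC).trans hcard
  have h3 := (Nat.ceil_lt_add_one (a := √n * D / τ) (by positivity)).le
  have h4 : Real.log (covNum z G τ) / n ≤ (2 * √n * D + 2 * D) * τ⁻¹ := by
    rw [div_le_iff₀ hn']
    calc Real.log (covNum z G τ) ≤ Real.log ((2 * (⌈√n * D / τ⌉₊ : ℝ) + 1) ^ n) :=
          Real.log_le_log (by linarith) h2
      _ = n * Real.log (2 * (⌈√n * D / τ⌉₊ : ℝ) + 1) := Real.log_pow _ _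
      _ ≤ n * ((2 * (⌈√n * D / τ⌉₊ : ℝ) + 1) - 1) := by
          gcongr
          exact Real.log_le_sub_one_of_pos (by positivity)
      _ ≤ n * (2 * (√n * D / τ + 1)) := by gcongr; linarith
      _ ≤ n * (2 * (√n * D / τ + D / τ)) := by
          gcongr
          exact (one_le_div hτ).mpr hτD
      _ = _ := by field_simp
  have h5 : τ ^ (-(1 / 2) : ℝ) = √(τ⁻¹) := by
    rw [Real.rpow_neg hτ.le, ← Real.sqrt_eq_rpow, Real.sqrt_inv]
  rw [h5, ← Real.sqrt_mul (by positivity)]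
  exact Real.sqrt_le_sqrt h4

theorem sqrt_entropy_intervalIntegrable (hGne : G.Nonempty) (hn : 0 < n)
    (hD : ∀ g ∈ G, dnMetric z g 0 ≤ D) (hD0 : 0 ≤ D) :
    IntervalIntegrable (fun τ => √(Real.log (covNum z G τ) / n)) volume 0 D := by
  have hI : IntervalIntegrable
      (fun τ : ℝ => √(2 * √n * D + 2 * D) * τ ^ (-(1 / 2) : ℝ)) volume 0 D :=
    (intervalIntegral.intervalIntegrable_rpow' (by norm_num)).const_mul _
  rw [intervalIntegrable_iff_integrableOn_Ioc_of_le hD0] at hI ⊢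
  refine hI.mono' ?_ ?_
  · exact (aemeasurable_restrict_of_antitoneOn measurableSet_Ioc
      ((sqrt_entropy_antitoneOn hGne hn hD).mono Set.Ioc_subset_Ioi_self)).aestronglyMeasurable
  · refine (ae_restrict_iff' measurableSet_Ioc).mpr (Filter.Eventually.of_forall fun τ hτ => ?_)
    rw [Real.norm_of_nonneg (Real.sqrt_nonneg _)]
    exact sqrt_entropy_le hGne hn hD hτ.1 hτ.2

end CoveringNumber

/-- Lower dyadic Riemann sums of an antitone function are at most its integral. -/
theorem dyadic_sum_le_integral {f : ℝ → ℝ} {D : ℝ} (hD : 0 < D) (hf0 : ∀ τ, 0 ≤ f τ)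
    (hf : AntitoneOn f (Set.Ioi 0)) (hI : IntervalIntegrable f volume 0 D) (J : ℕ) :
    ∑ j ∈ Finset.range J, D / 2 ^ (j + 2) * f (D / 2 ^ (j + 1)) ≤
      ∫ τ in (D / 2 ^ (J + 1))..D, f τ := by
  have hle : ∀ j : ℕ, D / 2 ^ j ≤ D := fun j => div_le_self hD.le (one_le_pow₀ (by norm_num))
  have hmem : ∀ j : ℕ, D / 2 ^ j ∈ Set.uIcc 0 D := fun j => by
    rw [Set.uIcc_of_le hD.le]; exact ⟨by positivity, hle j⟩
  have hsub : ∀ {a b : ℝ}, a ∈ Set.uIcc 0 D → b ∈ Set.uIcc 0 D →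
      IntervalIntegrable f volume a b := fun ha hb => hI.mono_set (Set.uIcc_subset_uIcc ha hb)
  induction J with
  | zero =>
    simpa using intervalIntegral.integral_nonneg (hle 1) fun τ _ => hf0 τ
  | succ J ih =>
    have hstep : D / 2 ^ (J + 2) * f (D / 2 ^ (J + 1)) ≤
        ∫ τ in (D / 2 ^ (J + 2))..(D / 2 ^ (J + 1)), f τ := by
      have hab : D / 2 ^ (J + 2) ≤ D / 2 ^ (J + 1) := by gcongr <;> norm_num
      have h := intervalIntegral.integral_mono_on (μ := volume)
        (f := fun _ => f (D / 2 ^ (J + 1))) hab intervalIntegrable_const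
        (hsub (hmem _) (hmem _)) fun τ hτ =>
          hf (lt_of_lt_of_le (by positivity) hτ.1) (show 0 < D / 2 ^ (J + 1) by positivity) hτ.2
      rw [intervalIntegral.integral_const, smul_eq_mul] at h
      convert h using 2
      field_simp
      ring
    rw [Finset.sum_range_succ, ← intervalIntegral.integral_add_adjacent_intervals
      (hsub (hmem (J + 2)) (hmem (J + 1))) (hsub (hmem (J + 1)) Set.right_mem_uIcc)]
    linarith

section Chaining

variable {Z : Type*} {n : ℕ} {z : Fin n → Z} {G : Set (Z → ℝ)} {D : ℝ}

/-- A radius bounding the class bounds its empirical Rademacher complexity. -/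
theorem empRad_le_radius (hGne : G.Nonempty) (hn : 0 < n)
    (hD : ∀ g ∈ G, dnMetric z g 0 ≤ D) : empRad G z ≤ D := by
  have : Nonempty G := hGne.to_subtype
  rw [empRad, div_le_iff₀ (by positivity)]
  have h := Finset.sum_le_sum fun (σ : Fin n → Bool) (_ : σ ∈ Finset.univ) =>
    ciSup_le fun g : G => by
      simpa using rademacher_sum_le_of_dnMetric_le z hn (hD g g.2) σ
  refine h.trans (le_of_eq ?_)
  simp [mul_comm]

/-- Chaining bound at dyadic scales. -/
theorem empRad_le_dyadic_sum (hGne : G.Nonempty) (hn : 0 < n)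
    (hD : ∀ g ∈ G, dnMetric z g 0 ≤ D) (hDpos : 0 < D) (J : ℕ) :
    empRad G z ≤ D / 2 ^ J + 12 * ∑ j ∈ Finset.range J,
      D / 2 ^ (j + 2) * √(Real.log (covNum z G (D / 2 ^ (j + 1))) / n) := by
  classical
  have : Nonempty G := hGne.to_subtype
  have hn' : (0 : ℝ) < n := by exact_mod_cast hn
  have hscale : ∀ j : ℕ, 0 < D / 2 ^ j := fun j => by positivity
  have hcov : ∀ j : ℕ, ∃ C : Finset (Z → ℝ), C.card = covNum z G (D / 2 ^ j) ∧
      (∀ g ∈ G, ∃ h ∈ C, dnMetric z g h ≤ D / 2 ^ j) ∧ (j = 0 → C = {0}) := by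
    intro j
    rcases eq_or_ne j 0 with rfl | hj
    · refine ⟨{0}, ?_, fun g hg => ⟨0, by simp, by simpa using hD g hg⟩, fun _ => rfl⟩
      exact le_antisymm (one_le_covNum hGne hn hD (hscale 0))
        (covNum_le_one_of_le hD (by simp))
    · obtain ⟨C, h1, h2⟩ := exists_min_cover hGne hn hD (hscale j)
      exact ⟨C, h1, h2, fun h => absurd h hj⟩
  choose V hVcard hVcov hV0 using hcov
  choose! v hvV hvd using hVcov
  let A : ℕ → Finset (Fin n → ℝ) := fun j =>
    ((V (j + 1) ×ˢ V j).filter fun p => dnMetric z p.1 p.2 ≤ 3 * (D / 2 ^ (j + 1))).image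
      fun p i => p.1 (z i) - p.2 (z i)
  have hmemA : ∀ j, ∀ g ∈ G, (fun i => v (j + 1) g (z i) - v j g (z i)) ∈ A j := by
    intro j g hg
    refine Finset.mem_image.mpr ⟨(v (j + 1) g, v j g), ?_, rfl⟩
    refine Finset.mem_filter.mpr
      ⟨Finset.mk_mem_product (hvV _ _ hg) (hvV _ _ hg), ?_⟩
    have h1 := dnMetric_triangle z (v (j + 1) g) g (v j g)
    rw [dnMetric_comm z (v (j + 1) g) g] at h1
    have h2 := hvd (j + 1) g hg
    have h3 := hvd j g hg
    have h4 : D / 2 ^ j = 2 * (D / 2 ^ (j + 1)) := by field_simp; ring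
    dsimp only
    linarith
  have hAne : ∀ j, (A j).Nonempty := fun j => ⟨_, hmemA j _ hGne.some_mem⟩
  let M : ℕ → (Fin n → Bool) → ℝ := fun j σ =>
    (A j).sup' (hAne j) fun a => ∑ i, signVal (σ i) * a i
  have hpt : ∀ σ, (⨆ g : G, (n : ℝ)⁻¹ * ∑ i, signVal (σ i) * (g : Z → ℝ) (z i)) ≤
      D / 2 ^ J + ∑ j ∈ Finset.range J, (n : ℝ)⁻¹ * M j σ := by
    intro σ
    refine ciSup_le fun g => ?_
    have hv0 : v 0 g = 0 := by
      have h := hvV 0 g g.2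
      rwa [hV0 0 rfl, Finset.mem_singleton] at h
    have htel : ∀ i, (g : Z → ℝ) (z i) = ((g : Z → ℝ) (z i) - v J g (z i)) +
        ∑ j ∈ Finset.range J, (v (j + 1) g (z i) - v j g (z i)) := by
      intro i
      rw [Finset.sum_range_sub (fun j => v j g (z i)), hv0]
      simp
    have hsplit : (n : ℝ)⁻¹ * ∑ i, signVal (σ i) * (g : Z → ℝ) (z i) =
        (n : ℝ)⁻¹ * ∑ i, signVal (σ i) * ((g : Z → ℝ) (z i) - v J g (z i)) +
        ∑ j ∈ Finset.range J,
          (n : ℝ)⁻¹ * ∑ i, signVal (σ i) * (v (j + 1) g (z i) - v j g (z i)) := by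
      rw [← Finset.mul_sum, ← mul_add, Finset.sum_comm, ← Finset.sum_add_distrib]
      congr 1
      refine Finset.sum_congr rfl fun i _ => ?_
      rw [← Finset.mul_sum, ← mul_add, ← htel i]
    rw [hsplit]
    refine add_le_add (rademacher_sum_le_of_dnMetric_le z hn (hvd J g g.2) σ)
      (Finset.sum_le_sum fun j _ => ?_)
    gcongr
    exact Finset.le_sup' (fun a : Fin n → ℝ => ∑ i, signVal (σ i) * a i) (hmemA j g g.2)
  have hM : ∀ j, (n : ℝ)⁻¹ * ((∑ σ, M j σ) / 2 ^ n) ≤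
      12 * (D / 2 ^ (j + 2) * √(Real.log (covNum z G (D / 2 ^ (j + 1))) / n)) := by
    intro j
    have hr : 0 ≤ √n * (3 * (D / 2 ^ (j + 1))) := by positivity
    have hmass := massart_finite_class (A j) (hAne j) hr (by
      intro a ha
      obtain ⟨p, hp, rfl⟩ := Finset.mem_image.mp ha
      exact sum_sq_le_of_dnMetric_le z hn (Finset.mem_filter.mp hp).2)
    set N := covNum z G (D / 2 ^ (j + 1))
    have hN1 : 1 ≤ N := one_le_covNum hGne hn hD (hscale _)
    have hcard : (A j).card ≤ N ^ 2 := by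
      refine Finset.card_image_le.trans ((Finset.card_filter_le _ _).trans ?_)
      rw [Finset.card_product, hVcard, hVcard, sq]
      refine Nat.mul_le_mul_left _ (covNum_antitoneOn hGne hn hD (hscale _) (hscale _) ?_)
      gcongr <;> norm_num
    have hlog : Real.log (A j).card ≤ 2 * Real.log N := by
      have h1 : (0 : ℝ) < (A j).card := by exact_mod_cast (hAne j).card_pos
      have h2 := Real.log_le_log h1 (show ((A j).card : ℝ) ≤ (N : ℝ) ^ 2 by exact_mod_cast hcard)
      rwa [Real.log_pow] at h2
    have hsqrt : √(2 * Real.log (A j).card) ≤ 2 * √(Real.log N) := by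
      rw [show (2 : ℝ) * √(Real.log N) = √(2 ^ 2 * Real.log N) by
        rw [Real.sqrt_mul (by positivity), Real.sqrt_sq (by norm_num)]]
      exact Real.sqrt_le_sqrt (by linarith)
    calc (n : ℝ)⁻¹ * ((∑ σ, M j σ) / 2 ^ n)
        ≤ (n : ℝ)⁻¹ * (√n * (3 * (D / 2 ^ (j + 1))) * √(2 * Real.log (A j).card)) := by
          gcongr
      _ ≤ (n : ℝ)⁻¹ * (√n * (3 * (D / 2 ^ (j + 1))) * (2 * √(Real.log N))) := by gcongr
      _ = (√n * √n) * (n : ℝ)⁻¹ * (12 * (D / 2 ^ (j + 2) * (√(Real.log N) / √n))) := by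
          field_simp
          ring
      _ = 12 * (D / 2 ^ (j + 2) * √(Real.log N / n)) := by
          rw [Real.mul_self_sqrt hn'.le, mul_inv_cancel₀ hn'.ne', one_mul,
            Real.sqrt_div' _ hn'.le]
  calc empRad G z
      ≤ (∑ σ : Fin n → Bool,
          (D / 2 ^ J + ∑ j ∈ Finset.range J, (n : ℝ)⁻¹ * M j σ)) / 2 ^ n := by
        rw [empRad]
        gcongr with σ
        exact hpt σ
    _ = D / 2 ^ J + ∑ j ∈ Finset.range J, (n : ℝ)⁻¹ * ((∑ σ, M j σ) / 2 ^ n) := by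
        rw [Finset.sum_add_distrib, Finset.sum_comm, add_div,
          Finset.sum_div (Finset.range J)]
        congr 1
        · simp
        · refine Finset.sum_congr rfl fun j _ => ?_
          rw [← Finset.mul_sum, mul_div_assoc]
    _ ≤ _ := by
        rw [Finset.mul_sum]
        exact add_le_add_right (Finset.sum_le_sum fun j _ => hM j) _

theorem empRad_le_entropy_integral (hGne : G.Nonempty) (hn : 0 < n)
    (hD : ∀ g ∈ G, dnMetric z g 0 ≤ D) {ε : ℝ} (hε : 0 < ε) (hεD : ε ≤ D) :
    empRad G z ≤ 4 * ε + 12 * ∫ τ in ε..D, √(Real.log (covNum z G τ) / n) := by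
  have hf0 : ∀ τ, 0 ≤ √(Real.log (covNum z G τ) / n) := fun τ => Real.sqrt_nonneg _
  rcases le_or_gt D (4 * ε) with h | h
  · have := intervalIntegral.integral_nonneg (μ := volume) hεD fun τ _ => hf0 τ
    linarith [empRad_le_radius hGne hn hD]
  have hDpos : 0 < D := hε.trans_le hεD
  obtain ⟨k, hk1, hk2⟩ := exists_nat_pow_near (x := D / (4 * ε)) (y := 2)
    ((one_le_div (by positivity)).mpr h.le) (by norm_num)
  have hI := sqrt_entropy_intervalIntegrable hGne hn hD hDpos.le
  have h1 := empRad_le_dyadic_sum hGne hn hD hDpos (k + 1)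
  have h2 := dyadic_sum_le_integral hDpos hf0 (sqrt_entropy_antitoneOn hGne hn hD) hI (k + 1)
  have h3 : D / 2 ^ (k + 1) ≤ 4 * ε := by
    rw [div_lt_iff₀ (by positivity)] at hk2
    rw [div_le_iff₀ (by positivity)]
    linarith
  have h4 : ε ≤ D / 2 ^ (k + 1 + 1) := by
    rw [le_div_iff₀ (by positivity)] at hk1 ⊢
    calc ε * 2 ^ (k + 1 + 1) = 2 ^ k * (4 * ε) := by ring
      _ ≤ D := hk1
  have h5 := intervalIntegral.integral_mono_interval (μ := volume) h4
    (div_le_self hDpos.le (one_le_pow₀ (by norm_num))) le_rfl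
    (Filter.Eventually.of_forall hf0)
    (hI.mono_set (Set.uIcc_subset_uIcc (by
      rw [Set.uIcc_of_le hDpos.le]; exact ⟨hε.le, hεD⟩) Set.right_mem_uIcc))
  linarith

end Chaining

/-- Dudley entropy integral bound: for every `ε ≥ 0`,
`R̂_n(G) ≤ 4ε + 12 ∫_ε^{sup_{G∈G} √(Ê[G²])} √(log N(G,τ,d_n)/n) dτ`
(hence `R̂_n(G)` is bounded by the infimum over `ε ≥ 0` of the right-hand side). -/
theorem dudley_entropy_integral {Z : Type*} (G : Set (Z → ℝ)) (hGne : G.Nonempty)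
    {n : ℕ} (hn : 0 < n) (z : Fin n → Z)
    (hbdd : BddAbove (Set.range fun g : G =>
      Real.sqrt ((n : ℝ)⁻¹ * ∑ i, ((g : Z → ℝ) (z i)) ^ 2))) :
    ∀ ε : ℝ, 0 ≤ ε →
      empRad G z ≤ 4 * ε +
        12 * ∫ τ in ε..(⨆ g : G, Real.sqrt ((n : ℝ)⁻¹ * ∑ i, ((g : Z → ℝ) (z i)) ^ 2)),
          Real.sqrt (Real.log (covNum z G τ) / n) := by
  intro ε hε
  set D := ⨆ g : G, Real.sqrt ((n : ℝ)⁻¹ * ∑ i, ((g : Z → ℝ) (z i)) ^ 2)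
  have hD : ∀ g ∈ G, dnMetric z g 0 ≤ D := fun g hg => by
    simpa only [dnMetric, Pi.zero_apply, sub_zero] using le_ciSup hbdd ⟨g, hg⟩
  have hD0 : 0 ≤ D := Real.iSup_nonneg fun _ => Real.sqrt_nonneg _
  have hrad := empRad_le_radius hGne hn hD
  rcases le_or_gt D ε with hDε | hεD
  · have hzero : ∫ τ in ε..D, √(Real.log (covNum z G τ) / n) = 0 := by
      refine intervalIntegral.integral_zero_ae (Filter.Eventually.of_forall fun τ hτ => ?_)
      rw [Set.uIoc_of_ge hDε] at hτ
      have h1 := covNum_le_one_of_le hD hτ.1.le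
      have h2 := one_le_covNum hGne hn hD (hD0.trans_lt hτ.1)
      simp [le_antisymm h1 h2]
    rw [hzero]
    linarith
  rcases hε.eq_or_lt with rfl | hεpos
  · refine le_of_forall_pos_le_add fun δ hδ => ?_
    set η := min (δ / 4) D
    have hηpos : 0 < η := lt_min (by positivity) hεD
    have h1 := empRad_le_entropy_integral hGne hn hD hηpos (min_le_right _ _)
    have h2 := intervalIntegral.integral_mono_interval (μ := volume) hηpos.le
      (min_le_right _ _) le_rfl
      (Filter.Eventually.of_forall fun τ => Real.sqrt_nonneg (Real.log (covNum z G τ) / n))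
      (sqrt_entropy_intervalIntegrable hGne hn hD hD0)
    have h3 : η ≤ δ / 4 := min_le_left _ _
    linarith
  · exact empRad_le_entropy_integral hGne hn hD hεpos hεD.le
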